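/- Let A = Σ_{e=1}^N L_e^T·A_e·L_e be an assembled finite element matrix where each element matrix A_e ∈ ℝ^{m×m} is symmetric positive definite. Then A is symmetric positive definite and its spectral condition number satisfies 1 ≤ κ(A) ≤ p_max · (max_e λ_max(A_e)) / (min_e λ_min(A_e)). -/

import Mathlib

open Matrix

/-- The eigenvalues of a symmetric real matrix listed in ascending order with multiplicity. -/
noncomputable def sortedEigs {n : ℕ} (M : Matrix (Fin n) (Fin n) ℝ) : Fin n → ℝ :=
  if h : M.IsHermitian then h.eigenvalues ∘ Tuple.sort h.eigenvalues else 0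

/-- The smallest and largest eigenvalues of a symmetric matrix. -/
noncomputable def lamMin {n : ℕ} (M : Matrix (Fin (n+1)) (Fin (n+1)) ℝ) : ℝ := sortedEigs M 0
noncomputable def lamMax {n : ℕ} (M : Matrix (Fin (n+1)) (Fin (n+1)) ℝ) : ℝ :=
  sortedEigs M (Fin.last n)

/-- The spectral condition number `κ(A) = λ_max(A)/λ_min(A)`. -/
noncomputable def specCond {n : ℕ} (M : Matrix (Fin (n+1)) (Fin (n+1)) ℝ) : ℝ :=
  lamMax M / lamMin M

/-- The Boolean connectivity matrix `L_e` of an element whose local-to-global map is `σ`: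
its rows are the standard basis vectors of `ℝ^n` selected by `σ`. -/
def elemL {ι : Type*} {n : ℕ} (σ : ι → Fin n) : Matrix ι (Fin n) ℝ :=
  Matrix.of fun i j => if σ i = j then 1 else 0

lemma quad_diag {n : ℕ} {M : Matrix (Fin n) (Fin n) ℝ} (h : M.IsHermitian) (x : Fin n → ℝ) :
    ∃ y : Fin n → ℝ, x ⬝ᵥ (M *ᵥ x) = ∑ i, h.eigenvalues i * y i ^ 2 ∧
      x ⬝ᵥ x = ∑ i, y i ^ 2 := by
  set U : Matrix (Fin n) (Fin n) ℝ := (h.eigenvectorUnitary : Matrix (Fin n) (Fin n) ℝ) with hU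
  have hUU : U * Uᵀ = 1 := by
    have := Unitary.coe_mul_star_self h.eigenvectorUnitary
    simpa [star_eq_conjTranspose, conjTranspose_eq_transpose_of_trivial] using this
  have hM : M = U * diagonal h.eigenvalues * Uᵀ := by
    have := h.spectral_theorem
    rw [Unitary.conjStarAlgAut_apply] at this
    simpa [star_eq_conjTranspose, conjTranspose_eq_transpose_of_trivial, Function.comp_def]
      using this
  refine ⟨Uᵀ *ᵥ x, ?_, ?_⟩
  · have : x ⬝ᵥ (M *ᵥ x) = (Uᵀ *ᵥ x) ⬝ᵥ (diagonal h.eigenvalues *ᵥ (Uᵀ *ᵥ x)) := by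
      conv_lhs => rw [hM]
      rw [← mulVec_mulVec, ← mulVec_mulVec, dotProduct_mulVec, mulVec_transpose U x]
    rw [this]
    simp only [dotProduct, mulVec_diagonal]
    exact Finset.sum_congr rfl fun i _ => by ring
  · have : x ⬝ᵥ x = (Uᵀ *ᵥ x) ⬝ᵥ (Uᵀ *ᵥ x) := by
      rw [mulVec_transpose U x, ← dotProduct_mulVec, ← mulVec_transpose, mulVec_mulVec, hUU,
        one_mulVec]
    rw [this]
    simp only [dotProduct, pow_two]

lemma sortedEigs_eq {n : ℕ} {M : Matrix (Fin n) (Fin n) ℝ} (h : M.IsHermitian) :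
    sortedEigs M = h.eigenvalues ∘ Tuple.sort h.eigenvalues := by
  unfold sortedEigs
  rw [dif_pos h]

lemma lamMin_le_eig {n : ℕ} {M : Matrix (Fin (n+1)) (Fin (n+1)) ℝ} (h : M.IsHermitian)
    (i : Fin (n+1)) : lamMin M ≤ h.eigenvalues i := by
  have := Tuple.monotone_sort h.eigenvalues (Fin.zero_le ((Tuple.sort h.eigenvalues).symm i))
  simpa [lamMin, sortedEigs_eq h] using this

lemma eig_le_lamMax {n : ℕ} {M : Matrix (Fin (n+1)) (Fin (n+1)) ℝ} (h : M.IsHermitian)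
    (i : Fin (n+1)) : h.eigenvalues i ≤ lamMax M := by
  have := Tuple.monotone_sort h.eigenvalues (Fin.le_last ((Tuple.sort h.eigenvalues).symm i))
  simpa [lamMax, sortedEigs_eq h] using this

lemma lamMin_eq {n : ℕ} {M : Matrix (Fin (n+1)) (Fin (n+1)) ℝ} (h : M.IsHermitian) :
    ∃ i, lamMin M = h.eigenvalues i :=
  ⟨Tuple.sort h.eigenvalues 0, by simp [lamMin, sortedEigs_eq h]⟩

lemma lamMax_eq {n : ℕ} {M : Matrix (Fin (n+1)) (Fin (n+1)) ℝ} (h : M.IsHermitian) :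
    ∃ i, lamMax M = h.eigenvalues i :=
  ⟨Tuple.sort h.eigenvalues (Fin.last n), by simp [lamMax, sortedEigs_eq h]⟩

lemma rayleigh_lower {n : ℕ} {M : Matrix (Fin (n+1)) (Fin (n+1)) ℝ} (h : M.IsHermitian)
    (x : Fin (n+1) → ℝ) : lamMin M * (x ⬝ᵥ x) ≤ x ⬝ᵥ (M *ᵥ x) := by
  obtain ⟨y, h1, h2⟩ := quad_diag h x
  rw [h1, h2, Finset.mul_sum]
  exact Finset.sum_le_sum fun i _ =>
    mul_le_mul_of_nonneg_right (lamMin_le_eig h i) (sq_nonneg _)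

lemma rayleigh_upper {n : ℕ} {M : Matrix (Fin (n+1)) (Fin (n+1)) ℝ} (h : M.IsHermitian)
    (x : Fin (n+1) → ℝ) : x ⬝ᵥ (M *ᵥ x) ≤ lamMax M * (x ⬝ᵥ x) := by
  obtain ⟨y, h1, h2⟩ := quad_diag h x
  rw [h1, h2, Finset.mul_sum]
  exact Finset.sum_le_sum fun i _ =>
    mul_le_mul_of_nonneg_right (eig_le_lamMax h i) (sq_nonneg _)

lemma eig_vec {n : ℕ} {M : Matrix (Fin n) (Fin n) ℝ} (h : M.IsHermitian) (i : Fin n) :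
    ∃ x : Fin n → ℝ, 0 < x ⬝ᵥ x ∧ x ⬝ᵥ (M *ᵥ x) = h.eigenvalues i * (x ⬝ᵥ x) := by
  refine ⟨⇑(h.eigenvectorBasis i), ?_, ?_⟩
  · have h1 := h.eigenvectorBasis.orthonormal.1 i
    have h2 := EuclideanSpace.real_norm_sq_eq (h.eigenvectorBasis i)
    rw [h1] at h2
    simp only [dotProduct, ← pow_two]
    rw [← h2]; norm_num
  · rw [h.mulVec_eigenvectorBasis, dotProduct_smul, smul_eq_mul]

lemma elemL_mulVec {ι : Type*} {n : ℕ} (σ : ι → Fin n) (x : Fin n → ℝ) :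
    elemL σ *ᵥ x = x ∘ σ := by
  ext i
  simp [elemL, mulVec, dotProduct]

lemma count_sum {N m n : ℕ} (σ : Fin (N+1) → Fin (m+1) → Fin (n+1))
    (hinj : ∀ e, Function.Injective (σ e)) (x : Fin (n+1) → ℝ) :
    ∑ e, (x ∘ σ e) ⬝ᵥ (x ∘ σ e) =
      ∑ i, ((Finset.univ.filter fun e => ∃ j, σ e j = i).card : ℝ) * (x i * x i) := by
  have h1 : ∀ e, (x ∘ σ e) ⬝ᵥ (x ∘ σ e) =
      ∑ i, if ∃ j, σ e j = i then x i * x i else 0 := by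
    intro e
    rw [← Finset.sum_filter]
    have : (Finset.univ.filter fun i => ∃ j, σ e j = i) = Finset.univ.image (σ e) := by
      ext i; simp
    rw [this, Finset.sum_image (fun a _ b _ hab => hinj e hab)]
    rfl
  simp_rw [h1]
  rw [Finset.sum_comm]
  refine Finset.sum_congr rfl fun i _ => ?_
  rw [← Finset.sum_filter, Finset.sum_const, nsmul_eq_mul]

/-- **Condition number bound for assembled finite element matrices** (Fried, Corollary 1).
Let `A = Σ_e L_eᵀ·A_e·L_e` be assembled from symmetric positive definite element matrices
`A_e`, with each `L_e` having distinct standard basis vectors as rows, every global index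
occurring in at least one and at most `p_max` elements. Then `A` is symmetric positive
definite and `1 ≤ κ(A) ≤ p_max · (max_e λ_max(A_e))/(min_e λ_min(A_e))`. -/
theorem assembled_condition_number_bound {N m n pmax : ℕ} (hpmax : 0 < pmax)
    (σ : Fin (N+1) → Fin (m+1) → Fin (n+1))
    (hinj : ∀ e, Function.Injective (σ e))
    (hcover : ∀ i : Fin (n+1), ∃ e j, σ e j = i)
    (hp : ∀ i : Fin (n+1), (Finset.univ.filter fun e => ∃ j, σ e j = i).card ≤ pmax)
    (Ae : Fin (N+1) → Matrix (Fin (m+1)) (Fin (m+1)) ℝ)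
    (hAe : ∀ e, (Ae e).PosDef)
    (A : Matrix (Fin (n+1)) (Fin (n+1)) ℝ)
    (hA : A = ∑ e, (elemL (σ e))ᵀ * Ae e * elemL (σ e)) :
    A.PosDef ∧ 1 ≤ specCond A ∧
      specCond A ≤ (pmax : ℝ) *
        (Finset.univ.sup' Finset.univ_nonempty fun e => lamMax (Ae e)) /
        (Finset.univ.inf' Finset.univ_nonempty fun e => lamMin (Ae e)) := by
  set a := Finset.univ.inf' Finset.univ_nonempty fun e => lamMin (Ae e) with ha
  set b := Finset.univ.sup' Finset.univ_nonempty fun e => lamMax (Ae e) with hb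
  have hae : ∀ e, a ≤ lamMin (Ae e) := fun e =>
    Finset.inf'_le (fun e => lamMin (Ae e)) (Finset.mem_univ e)
  have hbe : ∀ e, lamMax (Ae e) ≤ b := fun e =>
    Finset.le_sup' (fun e => lamMax (Ae e)) (Finset.mem_univ e)
  have hmin : ∀ e, 0 < lamMin (Ae e) := fun e => by
    obtain ⟨i, hi⟩ := lamMin_eq (hAe e).1
    rw [hi]; exact (hAe e).eigenvalues_pos i
  have hapos : 0 < a := by
    rw [ha, Finset.lt_inf'_iff]; exact fun e _ => hmin e
  have hbpos : 0 < b := by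
    obtain ⟨i, hi⟩ := lamMin_eq (hAe 0).1
    exact lt_of_lt_of_le (hmin 0) (hi.le.trans ((eig_le_lamMax (hAe 0).1 i).trans (hbe 0)))
  have hquad : ∀ x : Fin (n+1) → ℝ,
      x ⬝ᵥ (A *ᵥ x) = ∑ e, (x ∘ σ e) ⬝ᵥ (Ae e *ᵥ (x ∘ σ e)) := by
    intro x
    rw [hA, sum_mulVec, dotProduct_sum]
    refine Finset.sum_congr rfl fun e _ => ?_
    rw [← mulVec_mulVec, ← mulVec_mulVec, dotProduct_mulVec, vecMul_transpose, elemL_mulVec]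
  have hnn : ∀ {k : ℕ} (y : Fin k → ℝ), 0 ≤ y ⬝ᵥ y := fun y =>
    Finset.sum_nonneg fun i _ => mul_self_nonneg _
  have hlow : ∀ x : Fin (n+1) → ℝ, a * (x ⬝ᵥ x) ≤ x ⬝ᵥ (A *ᵥ x) := by
    intro x
    calc a * (x ⬝ᵥ x) ≤ a * ∑ e, (x ∘ σ e) ⬝ᵥ (x ∘ σ e) := by
          refine mul_le_mul_of_nonneg_left ?_ hapos.le
          rw [count_sum σ hinj]
          refine Finset.sum_le_sum fun i _ => ?_
          refine le_mul_of_one_le_left (mul_self_nonneg _) ?_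
          obtain ⟨e, j, hj⟩ := hcover i
          have : 0 < (Finset.univ.filter fun e => ∃ j, σ e j = i).card :=
            Finset.card_pos.2 ⟨e, by simpa using ⟨j, hj⟩⟩
          exact_mod_cast this
      _ = ∑ e, a * ((x ∘ σ e) ⬝ᵥ (x ∘ σ e)) := Finset.mul_sum _ _ _
      _ ≤ ∑ e, (x ∘ σ e) ⬝ᵥ (Ae e *ᵥ (x ∘ σ e)) := Finset.sum_le_sum fun e _ =>
          (mul_le_mul_of_nonneg_right (hae e) (hnn _)).trans (rayleigh_lower (hAe e).1 _)
      _ = _ := (hquad x).symm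
  have hup : ∀ x : Fin (n+1) → ℝ, x ⬝ᵥ (A *ᵥ x) ≤ (pmax * b) * (x ⬝ᵥ x) := by
    intro x
    calc x ⬝ᵥ (A *ᵥ x) = ∑ e, (x ∘ σ e) ⬝ᵥ (Ae e *ᵥ (x ∘ σ e)) := hquad x
      _ ≤ ∑ e, b * ((x ∘ σ e) ⬝ᵥ (x ∘ σ e)) := Finset.sum_le_sum fun e _ =>
          (rayleigh_upper (hAe e).1 _).trans (mul_le_mul_of_nonneg_right (hbe e) (hnn _))
      _ = b * ∑ e, (x ∘ σ e) ⬝ᵥ (x ∘ σ e) := (Finset.mul_sum _ _ _).symm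
      _ ≤ b * (pmax * (x ⬝ᵥ x)) := by
          refine mul_le_mul_of_nonneg_left ?_ hbpos.le
          rw [count_sum σ hinj, dotProduct, Finset.mul_sum]
          refine Finset.sum_le_sum fun i _ => ?_
          refine mul_le_mul_of_nonneg_right ?_ (mul_self_nonneg _)
          exact_mod_cast hp i
      _ = _ := by ring
  have hH : A.IsHermitian := by
    rw [hA]
    refine (conjTranspose_sum _ _).trans (Finset.sum_congr rfl fun e _ => ?_)
    have := isHermitian_conjTranspose_mul_mul (elemL (σ e)) (hAe e).1
    rw [conjTranspose_eq_transpose_of_trivial (elemL (σ e))] at this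
    exact this.eq
  obtain ⟨i, hi⟩ := lamMin_eq hH
  obtain ⟨j, hj⟩ := lamMax_eq hH
  have hla : a ≤ lamMin A := by
    obtain ⟨x, hx, hxe⟩ := eig_vec hH i
    have := hlow x
    rw [hxe, ← hi] at this
    exact le_of_mul_le_mul_right this hx
  have hlb : lamMax A ≤ pmax * b := by
    obtain ⟨x, hx, hxe⟩ := eig_vec hH j
    have := hup x
    rw [hxe, ← hj] at this
    exact le_of_mul_le_mul_right this hx
  have hpos : 0 < lamMin A := hapos.trans_le hla
  have hle : lamMin A ≤ lamMax A := hi.le.trans (eig_le_lamMax hH i)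
  refine ⟨?_, ?_, ?_⟩
  · exact hH.posDef_iff_eigenvalues_pos.2 fun k => hpos.trans_le (lamMin_le_eig hH k)
  · rw [specCond, one_le_div hpos]; exact hle
  · exact div_le_div₀ (by positivity) hlb hapos hla
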